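/- arXiv:1211.0189 — 3 statements merged into one kernel-verified Lean document; each statement's English description precedes it below -/
import Mathlib

section
/- Let (f,g) be a Möbius pair of complex-valued arithmetic functions, not both identically zero. If the sum of 1/n over those natural numbers n in the support of f converges (i.e., supp(f) is thin), then the support of g possesses an asymptotic density, and this density is positive. -/
open Filter

open scoped Classical in
noncomputable def countIn (A : Set ℕ) (x : ℕ) : ℕ :=
  ((Finset.Icc 1 x).filter (fun n => n ∈ A)).card

/-- `A ⊆ ℕ` has asymptotic density `δ`. -/
def HasDensity (A : Set ℕ) (δ : ℝ) : Prop :=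
  Tendsto (fun x : ℕ => (countIn A x : ℝ) / x) atTop (nhds δ)

/-- `(f,g)` is a Möbius pair: `f(n) = ∑_{d ∣ n} g(d)` for all positive `n`. -/
def MobiusPair (f g : ℕ → ℂ) : Prop :=
  ∀ n : ℕ, 0 < n → f n = ∑ d ∈ n.divisors, g d

/-- `A` is thin: `∑_{a ∈ A} 1/a < ∞`. -/
def Thin (A : Set ℕ) : Prop := Summable (fun a : A => (1 : ℝ) / a)

open scoped Classical in
theorem thin_tail (B : Set ℕ) (hB : Summable (B.indicator (fun n : ℕ => (1 : ℝ) / n)))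
    (ε : ℝ) (hε : 0 < ε) :
    ∃ T0 : ℕ, ∀ T, T0 ≤ T → ∀ t : Finset ℕ, (∀ b ∈ t, b ∈ B ∧ T < b) →
      ∑ b ∈ t, (1 : ℝ) / b < ε := by
  obtain ⟨s, hs⟩ := (summable_iff_vanishing_norm.1 hB) ε hε
  refine ⟨s.sup id, fun T hT t ht => ?_⟩
  have hd : Disjoint t s := by
    rw [Finset.disjoint_left]
    intro b hb hbs
    have h1 := (ht b hb).2
    have h2 : b ≤ s.sup id := Finset.le_sup (f := id) hbs
    omega
  have h := hs t hd
  have e : ∑ b ∈ t, B.indicator (fun n : ℕ => (1 : ℝ) / n) b = ∑ b ∈ t, (1 : ℝ) / b :=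
    Finset.sum_congr rfl fun b hb => Set.indicator_of_mem (ht b hb).1 _
  rw [e] at h
  exact lt_of_le_of_lt (Real.le_norm_self _) h

open scoped Classical in
theorem thin_zero (B : Set ℕ) (hB : Summable (B.indicator (fun n : ℕ => (1 : ℝ) / n)))
    (ε : ℝ) (hε : 0 < ε) :
    ∃ X0 : ℕ, ∀ X, X0 ≤ X → (((Finset.Icc 1 X).filter (fun n => n ∈ B)).card : ℝ) ≤ ε * X := by
  obtain ⟨T, hT⟩ := thin_tail B hB (ε / 2) (by positivity)
  obtain ⟨X0, hX0⟩ := exists_nat_ge (2 * T / ε)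
  refine ⟨X0, fun X hX => ?_⟩
  have hsub : (Finset.Icc 1 X).filter (fun n => n ∈ B) ⊆
      Finset.Icc 1 T ∪ (Finset.Icc 1 X).filter (fun n => n ∈ B ∧ T < n) := by
    intro b
    simp only [Finset.mem_filter, Finset.mem_union, Finset.mem_Icc]
    rintro ⟨h1, h2⟩
    by_cases h : T < b
    · exact Or.inr ⟨h1, h2, h⟩
    · left; omega
  have h1 := (Finset.card_le_card hsub).trans (Finset.card_union_le _ _)
  rw [Nat.card_Icc] at h1
  set t := (Finset.Icc 1 X).filter (fun n => n ∈ B ∧ T < n) with htdef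
  have h2 : (t.card : ℝ) ≤ X * ∑ b ∈ t, (1 : ℝ) / b := by
    rw [Finset.mul_sum, Finset.card_eq_sum_ones]
    push_cast
    refine Finset.sum_le_sum fun b hb => ?_
    simp only [htdef, Finset.mem_filter, Finset.mem_Icc] at hb
    have : (0 : ℝ) < b := by exact_mod_cast hb.1.1
    have h' : (b : ℝ) ≤ X := by exact_mod_cast hb.1.2
    rw [mul_one_div, le_div_iff₀ this]; linarith
  have h3 := hT T le_rfl t (fun b hb => by
    simp only [htdef, Finset.mem_filter] at hb; exact hb.2)
  have h4 : (T : ℝ) ≤ ε / 2 * X := by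
    have : (X0 : ℝ) ≤ X := by exact_mod_cast hX
    have := hX0.trans this
    rw [div_le_iff₀ hε] at this
    linarith
  have h5 : (((Finset.Icc 1 X).filter (fun n => n ∈ B)).card : ℝ) ≤ T + t.card := by
    have : ((Finset.Icc 1 X).filter (fun n => n ∈ B)).card ≤ T + t.card := by omega
    exact_mod_cast this
  have h6 : (X : ℝ) * ∑ b ∈ t, (1 : ℝ) / b ≤ X * (ε / 2) := by gcongr
  linarith

open scoped Classical in
theorem count_div (B : Set ℕ) (y x : ℕ) (ε : ℝ)
    (hT : ∀ t : Finset ℕ, (∀ b ∈ t, b ∈ B ∧ y < b) → ∑ b ∈ t, (1 : ℝ) / b < ε) :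
    (((Finset.Icc 1 x).filter (fun n => ∃ b ∈ B, y < b ∧ b ∣ n)).card : ℝ) ≤ ε * x := by
  set t := (Finset.Icc 1 x).filter (fun n => n ∈ B ∧ y < n) with htdef
  have hsub : (Finset.Icc 1 x).filter (fun n => ∃ b ∈ B, y < b ∧ b ∣ n) ⊆
      t.biUnion (fun b => (Finset.Ioc 0 x).filter (fun n => b ∣ n)) := by
    intro n
    simp only [htdef, Finset.mem_filter, Finset.mem_biUnion, Finset.mem_Icc, Finset.mem_Ioc]
    rintro ⟨h1, b, h2, h3, h4⟩
    have := Nat.le_of_dvd (by omega) h4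
    exact ⟨b, ⟨⟨by omega, by omega⟩, h2, h3⟩, ⟨by omega, h1.2⟩, h4⟩
  have h1 := (Finset.card_le_card hsub).trans Finset.card_biUnion_le
  have h2 : (((Finset.Icc 1 x).filter (fun n => ∃ b ∈ B, y < b ∧ b ∣ n)).card : ℝ) ≤
      ∑ b ∈ t, (((Finset.Ioc 0 x).filter (fun n => b ∣ n)).card : ℝ) := by exact_mod_cast h1
  have h3 : ∑ b ∈ t, (((Finset.Ioc 0 x).filter (fun n => b ∣ n)).card : ℝ)
      ≤ ∑ b ∈ t, (x : ℝ) * (1 / b) := by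
    refine Finset.sum_le_sum fun b _ => ?_
    rw [Nat.Ioc_filter_dvd_card_eq_div, mul_one_div]
    exact Nat.cast_div_le
  rw [← Finset.mul_sum] at h3
  have h4 := hT t (fun b hb => by
    simp only [htdef, Finset.mem_filter] at hb; exact hb.2)
  have h6 : (x : ℝ) * ∑ b ∈ t, (1 : ℝ) / b ≤ x * ε := by gcongr
  linarith

open scoped Classical in
theorem count_periodic (P : Set ℕ) (Q : ℕ) (hQ : 0 < Q) (hP : ∀ n, n + Q ∈ P ↔ n ∈ P) :
    ∃ δ : ℝ, HasDensity P δ := by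
  have hper : Function.Periodic (fun n => n ∈ P) Q := fun n => propext (hP n)
  set c := Nat.count (fun n => n ∈ P) Q with hc
  have hcount : ∀ x r, countIn P (x + r) ≤ countIn P x + r := by
    intro x r
    unfold countIn
    have hsub : (Finset.Icc 1 (x + r)).filter (fun n => n ∈ P) ⊆
        (Finset.Icc 1 x).filter (fun n => n ∈ P) ∪ Finset.Ioc x (x + r) := by
      intro n
      simp only [Finset.mem_filter, Finset.mem_union, Finset.mem_Icc, Finset.mem_Ioc]
      rintro ⟨h1, h2⟩
      by_cases h : n ≤ x
      · exact Or.inl ⟨⟨h1.1, h⟩, h2⟩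
      · right; omega
    have := (Finset.card_le_card hsub).trans (Finset.card_union_le _ _)
    rw [Nat.card_Ioc] at this
    omega
  have hmono : ∀ x r, countIn P x ≤ countIn P (x + r) := by
    intro x r
    unfold countIn
    exact Finset.card_le_card (Finset.filter_subset_filter _
      (Finset.Icc_subset_Icc le_rfl (by omega)))
  have hk : ∀ k, countIn P (Q * k) = c * k := by
    intro k
    induction k with
    | zero => simp [countIn]
    | succ k ih =>
      have e : (Finset.Icc 1 (Q * (k + 1))).filter (fun n => n ∈ P) =
          (Finset.Icc 1 (Q * k)).filter (fun n => n ∈ P) ∪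
          (Finset.Ico (Q * k + 1) (Q * k + 1 + Q)).filter (fun n => n ∈ P) := by
        rw [← Finset.filter_union]
        congr 1
        ext n
        simp only [Finset.mem_union, Finset.mem_Icc, Finset.mem_Ico, mul_add]
        omega
      have hd : Disjoint ((Finset.Icc 1 (Q * k)).filter (fun n => n ∈ P))
          ((Finset.Ico (Q * k + 1) (Q * k + 1 + Q)).filter (fun n => n ∈ P)) := by
        rw [Finset.disjoint_left]
        intro n
        simp only [Finset.mem_filter, Finset.mem_Icc, Finset.mem_Ico]
        omega
      have h2 := Nat.filter_Ico_card_eq_of_periodic (Q * k + 1) Q (fun n => n ∈ P) hper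
      unfold countIn at ih ⊢
      rw [e, Finset.card_union_of_disjoint hd, ih, mul_add, mul_one]
      congr 1
  refine ⟨(c : ℝ) / Q, ?_⟩
  unfold HasDensity
  rw [tendsto_iff_dist_tendsto_zero]
  have hlim : Tendsto (fun x : ℕ => ((Q : ℝ) + c) / x) atTop (nhds 0) :=
    tendsto_const_div_atTop_nhds_zero_nat _
  refine squeeze_zero' (Eventually.of_forall fun _ => dist_nonneg) ?_ hlim
  filter_upwards [eventually_gt_atTop 0] with x hx
  have hx' : (0 : ℝ) < x := by exact_mod_cast hx
  have hQ' : (0 : ℝ) < Q := by exact_mod_cast hQ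
  have hdm := Nat.div_add_mod x Q
  have hlt := Nat.mod_lt x hQ
  have a1 := hcount (Q * (x / Q)) (x % Q)
  have a2 := hmono (Q * (x / Q)) (x % Q)
  rw [hdm, hk] at a1 a2
  have a1' : (countIn P x : ℝ) ≤ c * ((x / Q : ℕ) : ℝ) + Q := by
    have : countIn P x ≤ c * (x / Q) + Q := by omega
    exact_mod_cast this
  have a2' : (c : ℝ) * ((x / Q : ℕ) : ℝ) ≤ countIn P x := by exact_mod_cast a2
  have b1 : ((x / Q : ℕ) : ℝ) ≤ (x : ℝ) / Q := Nat.cast_div_le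
  have b2 : (x : ℝ) / Q ≤ ((x / Q : ℕ) : ℝ) + 1 := by
    rw [div_le_iff₀ hQ']
    have : x ≤ (x / Q + 1) * Q := by rw [add_mul, mul_comm]; omega
    exact_mod_cast this
  have c0 : (0 : ℝ) ≤ c := Nat.cast_nonneg _
  have d1 := mul_le_mul_of_nonneg_left b1 c0
  have d2 := mul_le_mul_of_nonneg_left b2 c0
  rw [Real.dist_eq, show (countIn P x : ℝ) / x - c / Q = (countIn P x - c * (x / Q)) / x by
    field_simp, abs_div, abs_of_pos hx']
  gcongr
  rw [abs_le]
  constructor <;> linarith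

open scoped Classical in
theorem density_of_approx (S : Set ℕ)
    (h : ∀ ε : ℝ, 0 < ε → ∃ (P : Set ℕ) (E : Set ℕ) (δ : ℝ), HasDensity P δ ∧
      (∀ n, 0 < n → n ∉ E → (n ∈ S ↔ n ∈ P)) ∧ ∀ x : ℕ, (countIn E x : ℝ) ≤ ε * x) :
    ∃ δ : ℝ, HasDensity S δ := by
  unfold HasDensity
  apply cauchySeq_tendsto_of_complete
  rw [Metric.cauchySeq_iff']
  intro ε hε
  obtain ⟨P, E, δ, hP, hE, hc⟩ := h (ε / 8) (by positivity)
  have key : ∀ A C : Set ℕ, (∀ n, 0 < n → n ∉ E → (n ∈ A → n ∈ C)) →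
      ∀ x, countIn A x ≤ countIn C x + countIn E x := by
    intro A C hAC x
    unfold countIn
    refine (Finset.card_le_card ?_).trans (Finset.card_union_le _ _)
    intro n
    simp only [Finset.mem_filter, Finset.mem_union, Finset.mem_Icc]
    rintro ⟨h1, h2⟩
    by_cases hn : n ∈ E
    · exact Or.inr ⟨h1, hn⟩
    · exact Or.inl ⟨h1, hAC n (by omega) hn h2⟩
  unfold HasDensity at hP
  rw [Metric.tendsto_atTop] at hP
  obtain ⟨N, hN⟩ := hP (ε / 8) (by positivity)
  have hb : ∀ x, N + 1 ≤ x → |(countIn S x : ℝ) / x - δ| < ε / 3 := by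
    intro x hx
    have hx' : (0 : ℝ) < x := by exact_mod_cast (show 0 < x by omega)
    have k1 := key S P (fun n h0 hn => (hE n h0 hn).1) x
    have k2 := key P S (fun n h0 hn => (hE n h0 hn).2) x
    have k1' : (countIn S x : ℝ) ≤ countIn P x + countIn E x := by exact_mod_cast k1
    have k2' : (countIn P x : ℝ) ≤ countIn S x + countIn E x := by exact_mod_cast k2
    have k3 := hc x
    have e := hN x (by omega)
    rw [Real.dist_eq, abs_lt] at e
    have l1 : (countIn S x : ℝ) / x ≤ countIn P x / x + ε / 8 := by
      rw [div_add' _ _ _ hx'.ne']; gcongr; linarith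
    have l2 : (countIn P x : ℝ) / x ≤ countIn S x / x + ε / 8 := by
      rw [div_add' _ _ _ hx'.ne']; gcongr; linarith
    rw [abs_lt]
    constructor <;> linarith [e.1, e.2]
  refine ⟨N + 1, fun n hn => ?_⟩
  have h1 := hb n hn
  have h2 := hb (N + 1) le_rfl
  rw [Real.dist_eq]
  rw [abs_lt] at *
  constructor <;> linarith [h1.1, h1.2, h2.1, h2.2]

/-- the twisted formula for the support of `g` -/
theorem g_ne_zero_iff (f g : ℕ → ℂ) (hfg : MobiusPair f g) (n : ℕ) (hn : 0 < n) :
    g n ≠ 0 ↔ ∑ d ∈ n.divisors.filter (fun d => Squarefree (n / d)),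
      (-1 : ℂ) ^ (ArithmeticFunction.cardFactors d) * f d ≠ 0 := by
  have h := (ArithmeticFunction.sum_eq_iff_sum_mul_moebius_eq (f := g) (g := f)).1
    (fun n hn => (hfg n hn).symm) n hn
  rw [Nat.sum_divisorsAntidiagonal' (fun a b => ((ArithmeticFunction.moebius a : ℤ) : ℂ) * f b)] at h
  have e : (-1 : ℂ) ^ (ArithmeticFunction.cardFactors n) * g n =
      ∑ d ∈ n.divisors.filter (fun d => Squarefree (n / d)),
      (-1 : ℂ) ^ (ArithmeticFunction.cardFactors d) * f d := by
    rw [← h, Finset.mul_sum, Finset.sum_filter]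
    refine Finset.sum_congr rfl fun d hd => ?_
    have hdn := (Nat.mem_divisors.1 hd).1
    obtain ⟨m, rfl⟩ := hdn
    have hd0 : d ≠ 0 := by rintro rfl; simp at hn
    have hm0 : m ≠ 0 := by rintro rfl; simp at hn
    rw [Nat.mul_div_cancel_left _ (Nat.pos_of_ne_zero hd0)]
    split_ifs with hs
    · rw [ArithmeticFunction.moebius_apply_of_squarefree hs,
        ArithmeticFunction.cardFactors_mul hd0 hm0, pow_add]
      push_cast
      rw [← mul_assoc, mul_assoc (_ ^ _), ← pow_add, ← two_mul, pow_mul]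
      simp
    · rw [ArithmeticFunction.moebius_eq_zero_of_not_squarefree hs]
      simp
  rw [← e]
  simp

theorem sq_of_not_squarefree {m : ℕ} (h : ¬ Squarefree m) : ∃ k, 2 ≤ k ∧ k ^ 2 ∣ m := by
  rw [Nat.squarefree_iff_prime_squarefree] at h
  push Not at h
  obtain ⟨p, hp, hd⟩ := h
  exact ⟨p, hp.two_le, by rwa [pow_two]⟩

/-- support of `f` together with the nontrivial squares -/
def badSet (f : ℕ → ℂ) : Set ℕ := {n | f n ≠ 0} ∪ {n | ∃ k, 2 ≤ k ∧ k ^ 2 = n}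

theorem badSet_thin (f : ℕ → ℂ) (hthin : Thin {n : ℕ | f n ≠ 0}) :
    Summable ((badSet f).indicator (fun n : ℕ => (1 : ℝ) / n)) := by
  have h1 : Summable ({n : ℕ | f n ≠ 0}.indicator (fun n : ℕ => (1 : ℝ) / n)) :=
    summable_subtype_iff_indicator.1 hthin
  have h2 : Summable ((Set.range (fun k : ℕ => k ^ 2)).indicator (fun n : ℕ => (1 : ℝ) / n)) := by
    rw [← summable_subtype_iff_indicator]
    have hinj : Function.Injective (fun k : ℕ => k ^ 2) := Nat.pow_left_injective (n := 2) (by norm_num)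
    rw [← (Equiv.ofInjective _ hinj).summable_iff]
    have : Summable (fun k : ℕ => (1 : ℝ) / (k : ℝ) ^ 2) := Real.summable_one_div_nat_pow.2 (by norm_num)
    convert this using 2 with k
    simp
  refine Summable.of_nonneg_of_le (fun n => ?_) (fun n => ?_) (h1.add h2)
  · exact Set.indicator_nonneg (fun _ _ => by positivity) _
  · have p1 : 0 ≤ ({n : ℕ | f n ≠ 0}.indicator (fun n : ℕ => (1 : ℝ) / n)) n :=
      Set.indicator_nonneg (fun _ _ => by positivity) _
    have p2 : 0 ≤ ((Set.range (fun k : ℕ => k ^ 2)).indicator (fun n : ℕ => (1 : ℝ) / n)) n :=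
      Set.indicator_nonneg (fun _ _ => by positivity) _
    by_cases hn : n ∈ badSet f
    · rw [Set.indicator_of_mem hn]
      rcases hn with hn | ⟨k, _, hk⟩
      · rw [Set.indicator_of_mem hn]; linarith
      · rw [Set.indicator_of_mem (s := Set.range (fun k : ℕ => k ^ 2)) ⟨k, hk⟩]; linarith
    · rw [Set.indicator_of_notMem hn]; exact add_nonneg p1 p2

open scoped Classical in
theorem exists_density (f g : ℕ → ℂ) (hfg : MobiusPair f g)
    (hthin : Thin {n : ℕ | f n ≠ 0}) : ∃ δ : ℝ, HasDensity {n : ℕ | g n ≠ 0} δ := by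
  apply density_of_approx
  intro ε hε
  obtain ⟨y, hy⟩ := thin_tail _ (badSet_thin f hthin) ε hε
  let F : ℕ → ℂ := fun d => (-1 : ℂ) ^ (ArithmeticFunction.cardFactors d) * f d
  let D : ℕ → Finset ℕ := fun n => (Finset.Icc 1 y).filter
    (fun d => d ∣ n ∧ ∀ k, 2 ≤ k → k ^ 2 ≤ y → ¬ (k ^ 2 * d ∣ n))
  let P : Set ℕ := {n | ∑ d ∈ D n, F d ≠ 0}
  have hper : ∀ n, n + (y * y).factorial ∈ P ↔ n ∈ P := by
    intro n
    have : D (n + (y * y).factorial) = D n := by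
      apply Finset.filter_congr
      intro d hd
      rw [Finset.mem_Icc] at hd
      have hdv : d ∣ (y * y).factorial := Nat.dvd_factorial (by omega) (by nlinarith)
      rw [← Nat.dvd_add_iff_left hdv]
      refine and_congr_right fun _ => ?_
      refine forall_congr' fun k => forall_congr' fun hk => forall_congr' fun hky => ?_
      have hkd : k ^ 2 * d ∣ (y * y).factorial :=
        Nat.dvd_factorial (Nat.mul_pos (pow_pos (by omega) 2) hd.1) (Nat.mul_le_mul hky hd.2)
      rw [← Nat.dvd_add_iff_left hkd]
    simp only [P, Set.mem_ofPred_eq, this]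
  obtain ⟨δ, hδ⟩ := count_periodic P _ (Nat.factorial_pos _) hper
  refine ⟨P, {n | ∃ b ∈ badSet f, y < b ∧ b ∣ n}, δ, hδ, ?_, ?_⟩
  · intro n hn hE
    simp only [Set.mem_ofPred_eq] at hE
    push Not at hE
    have hE' : ∀ b ∈ badSet f, b ∣ n → b ≤ y := fun b hb hd => by
      by_contra hlt
      exact hE b hb (by omega) hd
    simp only [Set.mem_ofPred_eq, P]
    rw [g_ne_zero_iff f g hfg n hn]
    change ∑ d ∈ n.divisors.filter (fun d => Squarefree (n / d)), F d ≠ 0 ↔ _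
    rw [← Finset.sum_filter_ne_zero, ← Finset.sum_filter_ne_zero (D n)]
    have : Finset.filter (fun d => F d ≠ 0) (n.divisors.filter (fun d => Squarefree (n / d)))
        = Finset.filter (fun d => F d ≠ 0) (D n) := by
      ext d
      simp only [D, Finset.mem_filter, Nat.mem_divisors, Finset.mem_Icc]
      refine and_congr_left fun hF => ?_
      have hfd : f d ≠ 0 := fun h => hF (by simp [F, h])
      constructor
      · rintro ⟨⟨hd, _⟩, hs⟩
        have hd0 := Nat.pos_of_dvd_of_pos hd hn
        refine ⟨⟨hd0, hE' d (Or.inl hfd) hd⟩, hd, fun k hk _ hkd => ?_⟩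
        obtain ⟨m, rfl⟩ := hkd
        rw [show k ^ 2 * d * m = d * (k ^ 2 * m) by ring, Nat.mul_div_cancel_left _ hd0] at hs
        have := hs k ⟨m, by ring⟩
        rw [Nat.isUnit_iff] at this
        omega
      · rintro ⟨⟨hd0, _⟩, hd, hk⟩
        refine ⟨⟨hd, hn.ne'⟩, ?_⟩
        obtain ⟨m, rfl⟩ := hd
        rw [Nat.mul_div_cancel_left _ hd0]
        by_contra hs
        obtain ⟨k, hk2, hkm⟩ := sq_of_not_squarefree hs
        refine hk k hk2 (hE' _ (Or.inr ⟨k, hk2, rfl⟩) (hkm.mul_left _)) ?_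
        rw [mul_comm]
        exact mul_dvd_mul_left _ hkm
    rw [this]
  · intro x
    exact count_div _ y x ε (hy y le_rfl)


open scoped Classical in
theorem progression_count (b n L J : ℕ) (hb : 0 < b) (hn : 0 < n) :
    (((Finset.range J).filter (fun j => b ∣ n * (1 + L * j))).card : ℝ) ≤ J * n * (1 / b) + 1 := by
  have hg : 0 < Nat.gcd b n := Nat.gcd_pos_of_pos_left _ hb
  obtain ⟨c, hc⟩ := Nat.gcd_dvd_left b n
  obtain ⟨e, he⟩ := Nat.gcd_dvd_right b n
  set d := Nat.gcd b n with hd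
  have hc0 : 0 < c := by
    rcases Nat.eq_zero_or_pos c with h | h
    · rw [h] at hc; omega
    · exact h
  have hcop : Nat.Coprime c e := by
    have h1 : d * Nat.gcd c e = d * 1 := by
      rw [← Nat.gcd_mul_left, ← hc, ← he, mul_one]
    exact Nat.eq_of_mul_eq_mul_left hg h1
  have hdvd : ∀ j, b ∣ n * (1 + L * j) → c ∣ 1 + L * j := by
    intro j h
    rw [hc, he, mul_assoc] at h
    exact hcop.dvd_of_dvd_mul_left (Nat.dvd_of_mul_dvd_mul_left hg h)
  rcases Finset.eq_empty_or_nonempty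
    ((Finset.range J).filter (fun j => b ∣ n * (1 + L * j))) with h0 | ⟨j0, hj0⟩
  · rw [h0]; simp; positivity
  · have hj0' := hdvd j0 (Finset.mem_filter.1 hj0).2
    have hcL : Nat.Coprime c L := by
      have h1 : Nat.gcd c L ∣ 1 + L * j0 := (Nat.gcd_dvd_left c L).trans hj0'
      have h2 : Nat.gcd c L ∣ L * j0 := (Nat.gcd_dvd_right c L).mul_right _
      exact Nat.dvd_one.1 ((Nat.dvd_add_left h2).1 h1)
    have hsub : (Finset.range J).filter (fun j => b ∣ n * (1 + L * j)) ⊆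
        (Finset.range J).filter (fun j => j ≡ j0 [MOD c]) := by
      intro j hj
      rw [Finset.mem_filter] at hj ⊢
      refine ⟨hj.1, ?_⟩
      have h1 := hdvd j hj.2
      have h2 : 1 + L * j ≡ 1 + L * j0 [MOD c] :=
        ((Nat.modEq_zero_iff_dvd).2 h1).trans ((Nat.modEq_zero_iff_dvd).2 hj0').symm
      have h3 : L * j ≡ L * j0 [MOD c] := Nat.ModEq.add_left_cancel' 1 h2
      exact Nat.ModEq.cancel_left_of_coprime hcL h3
    have h1 := Finset.card_le_card hsub
    have h2 : ((Finset.range J).filter (fun j => j ≡ j0 [MOD c])).card ≤ J / c + 1 := by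
      have := Nat.count_modEq_card J hc0 j0
      rw [Nat.count_eq_card_filter_range] at this
      have h3 : (if j0 % c < J % c then 1 else 0) ≤ 1 := by split_ifs <;> omega
      convert (this.le.trans (Nat.add_le_add_left h3 _)) using 2
    have h3 : (((Finset.range J).filter (fun j => b ∣ n * (1 + L * j))).card : ℝ) ≤
        ((J / c : ℕ) : ℝ) + 1 := by exact_mod_cast h1.trans h2
    have h4 : ((J / c : ℕ) : ℝ) ≤ (J : ℝ) / c := Nat.cast_div_le
    have hc0' : (0 : ℝ) < c := by exact_mod_cast hc0
    have hb0' : (0 : ℝ) < b := by exact_mod_cast hb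
    have h5 : (J : ℝ) / c ≤ J * n * (1 / b) := by
      have hdn : d ≤ n := Nat.gcd_le_right _ hn
      have : b ≤ n * c := by
        calc b = d * c := hc
          _ ≤ n * c := Nat.mul_le_mul_right _ hdn
      have h' : (b : ℝ) ≤ n * c := by exact_mod_cast this
      rw [mul_one_div, div_le_div_iff₀ hc0' hb0', mul_assoc]
      gcongr
    linarith

open scoped Classical in
theorem lower_bound (f g : ℕ → ℂ) (hfg : MobiusPair f g)
    (hne : ∃ n : ℕ, 0 < n ∧ f n ≠ 0) (hthin : Thin {n : ℕ | f n ≠ 0}) :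
    ∃ η : ℝ, 0 < η ∧ ∀ N : ℕ, ∃ X, N ≤ X ∧ η ≤ (countIn {n : ℕ | g n ≠ 0} X : ℝ) / X := by
  obtain ⟨n₀, ⟨hn₀, hfn⟩, hmin⟩ : ∃ n₀, (0 < n₀ ∧ f n₀ ≠ 0) ∧
      ∀ m, 0 < m → f m ≠ 0 → n₀ ≤ m :=
    ⟨Nat.find hne, Nat.find_spec hne, fun m h1 h2 => Nat.find_min' hne ⟨h1, h2⟩⟩
  have hn₀' : (0 : ℝ) < n₀ := by exact_mod_cast hn₀
  have hB := badSet_thin f hthin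
  obtain ⟨T0, hT0⟩ := thin_tail _ hB (1 / (4 * n₀)) (by positivity)
  set T := max T0 n₀ with hT
  have hT' := hT0 T (le_max_left _ _)
  set L := T.factorial with hL
  have hL0 : 0 < L := Nat.factorial_pos _
  obtain ⟨X0, hX0⟩ := thin_zero _ hB (1 / (4 * (n₀ * (1 + L)))) (by positivity)
  refine ⟨1 / (2 * (n₀ * (1 + L))), by positivity, fun N => ?_⟩
  set J := max (max X0 N) 1 with hJ
  have hJ1 : 1 ≤ J := le_max_right _ _
  have hJX : X0 ≤ J := (le_max_left _ _).trans (le_max_left _ _)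
  have hJN : N ≤ J := (le_max_right _ _).trans (le_max_left _ _)
  set X := n₀ * (1 + L * J) with hX
  have hXJ : J ≤ X := by
    calc J ≤ 1 + L * J := by nlinarith
      _ ≤ X := Nat.le_mul_of_pos_left _ hn₀
  have hXle : (X : ℝ) ≤ n₀ * (1 + L) * J := by
    have h1 : (1 : ℝ) ≤ J := by exact_mod_cast hJ1
    rw [hX]
    push_cast
    rw [mul_assoc]
    gcongr
    nlinarith
  have hX0' : (0 : ℝ) < X := by exact_mod_cast (show 0 < X by omega)
  refine ⟨X, by omega, ?_⟩
  -- bad indices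
  set bad := (Finset.range J).filter
    (fun j => ∃ b ∈ badSet f, T < b ∧ b ∣ n₀ * (1 + L * j)) with hbad
  set good := (Finset.range J).filter
    (fun j => ¬ ∃ b ∈ badSet f, T < b ∧ b ∣ n₀ * (1 + L * j)) with hgood
  have hsum : bad.card + good.card = J := by
    rw [hbad, hgood, Finset.card_filter_add_card_filter_not, Finset.card_range]
  set t := (Finset.Icc 1 X).filter (fun n => n ∈ badSet f ∧ T < n) with ht
  have hbsub : bad ⊆ t.biUnion
      (fun b => (Finset.range J).filter (fun j => b ∣ n₀ * (1 + L * j))) := by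
    intro j hj
    rw [hbad, Finset.mem_filter] at hj
    obtain ⟨hj1, b, hb1, hb2, hb3⟩ := hj
    rw [Finset.mem_biUnion]
    refine ⟨b, ?_, Finset.mem_filter.2 ⟨hj1, hb3⟩⟩
    rw [ht, Finset.mem_filter, Finset.mem_Icc]
    have h1 := Nat.le_of_dvd (by positivity) hb3
    have h2 : n₀ * (1 + L * j) ≤ X := by
      have := (Finset.mem_range.1 hj1).le
      rw [hX]
      gcongr
    exact ⟨⟨by omega, by omega⟩, hb1, hb2⟩
  have hbc : (bad.card : ℝ) ≤ ∑ b ∈ t, ((J : ℝ) * n₀ * (1 / b) + 1) := by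
    have h1 := (Finset.card_le_card hbsub).trans Finset.card_biUnion_le
    have h2 : (bad.card : ℝ) ≤ ∑ b ∈ t,
        (((Finset.range J).filter (fun j => b ∣ n₀ * (1 + L * j))).card : ℝ) := by
      exact_mod_cast h1
    refine h2.trans (Finset.sum_le_sum fun b hb => ?_)
    rw [ht, Finset.mem_filter, Finset.mem_Icc] at hb
    exact progression_count b n₀ L J (by omega) hn₀
  rw [Finset.sum_add_distrib, ← Finset.mul_sum] at hbc
  have hs1 : (J : ℝ) * n₀ * ∑ b ∈ t, (1 : ℝ) / b ≤ J / 4 := by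
    have h1 := hT' t (fun b hb => (Finset.mem_filter.1 hb).2)
    calc (J : ℝ) * n₀ * ∑ b ∈ t, (1 : ℝ) / b ≤ J * n₀ * (1 / (4 * n₀)) := by gcongr
      _ = J / 4 := by field_simp
  have hs2 : ∑ b ∈ t, (1 : ℝ) ≤ J / 4 := by
    have h1 := hX0 X (hJX.trans hXJ)
    have h2 : t.card ≤ ((Finset.Icc 1 X).filter (fun n => n ∈ badSet f)).card := by
      apply Finset.card_le_card
      intro b hb
      rw [ht, Finset.mem_filter] at hb
      exact Finset.mem_filter.2 ⟨hb.1, hb.2.1⟩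
    have h3 : (t.card : ℝ) ≤ ((Finset.Icc 1 X).filter (fun n => n ∈ badSet f)).card := by
      exact_mod_cast h2
    rw [Finset.sum_const, nsmul_eq_mul, mul_one]
    calc (t.card : ℝ) ≤ 1 / (4 * (n₀ * (1 + L))) * X := h3.trans h1
      _ ≤ 1 / (4 * (n₀ * (1 + L))) * (n₀ * (1 + L) * J) := by gcongr
      _ = J / 4 := by field_simp
  have hgc : (J : ℝ) / 2 ≤ good.card := by
    have : (bad.card : ℝ) + good.card = J := by exact_mod_cast hsum
    linarith
  have hgs : good.card ≤ countIn {n : ℕ | g n ≠ 0} X := by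
    obtain ⟨S, hS⟩ : ∃ S : Set ℕ, S = {n : ℕ | g n ≠ 0} := ⟨_, rfl⟩
    rw [← hS]
    unfold countIn
    refine Finset.card_le_card_of_injOn (fun j => n₀ * (1 + L * j)) ?_ ?_
    · intro j hj
      rw [Finset.mem_coe, hgood, Finset.mem_filter] at hj
      obtain ⟨hj1, hj2⟩ := hj
      have hj3 : ∀ b ∈ badSet f, b ∣ n₀ * (1 + L * j) → b ≤ T := fun b hb hd => by
        by_contra hlt
        exact hj2 ⟨b, hb, by omega, hd⟩
      have hm0 : 0 < 1 + L * j := by omega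
      have hcop : ∀ b, 0 < b → b ≤ T → Nat.Coprime b (1 + L * j) := by
        intro b hb0 hbT
        have h1 : b ∣ L * j := (Nat.dvd_factorial hb0 hbT).mul_right _
        obtain ⟨q, hq⟩ := h1
        rw [hq]
        simp
      rw [Finset.mem_coe, Finset.mem_filter, Finset.mem_Icc]
      refine ⟨⟨Nat.mul_pos hn₀ hm0, ?_⟩, ?_⟩
      · have := (Finset.mem_range.1 hj1).le
        exact Nat.mul_le_mul_left _ (Nat.add_le_add_left (Nat.mul_le_mul_left _ this) _)
      · rw [hS]
        change g (n₀ * (1 + L * j)) ≠ 0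
        rw [g_ne_zero_iff f g hfg _ (Nat.mul_pos hn₀ hm0), Finset.sum_eq_single n₀]
        · simp [hfn]
        · intro d hd hdn
          rw [Finset.mem_filter, Nat.mem_divisors] at hd
          by_contra hne0
          have hfd : f d ≠ 0 := fun h => hne0 (by rw [h, mul_zero])
          have hd0 : 0 < d := Nat.pos_of_dvd_of_pos hd.1.1 (Nat.mul_pos hn₀ hm0)
          have hdT := hj3 d (Or.inl hfd) hd.1.1
          have h1 := (hcop d hd0 hdT).dvd_of_dvd_mul_right hd.1.1
          have h2 := Nat.le_of_dvd hn₀ h1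
          have h3 := hmin d hd0 hfd
          omega
        · intro hnot
          exfalso
          apply hnot
          rw [Finset.mem_filter, Nat.mem_divisors, Nat.mul_div_cancel_left _ hn₀]
          refine ⟨⟨Dvd.intro _ rfl, (Nat.mul_pos hn₀ hm0).ne'⟩, ?_⟩
          by_contra hs
          obtain ⟨k, hk, hkm⟩ := sq_of_not_squarefree hs
          have h1 := hj3 _ (Or.inr ⟨k, hk, rfl⟩) (hkm.mul_left n₀)
          have h2 := hcop _ (by positivity) h1
          have h3 := Nat.Coprime.eq_one_of_dvd h2 hkm
          nlinarith
    · intro i _ j _ hij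
      have h1 := Nat.eq_of_mul_eq_mul_left hn₀ hij
      exact Nat.eq_of_mul_eq_mul_left hL0 (Nat.add_left_cancel h1)
  have hgs' : (good.card : ℝ) ≤ countIn {n : ℕ | g n ≠ 0} X := by exact_mod_cast hgs
  rw [le_div_iff₀ hX0']
  calc 1 / (2 * (n₀ * (1 + L))) * (X : ℝ)
      ≤ 1 / (2 * (n₀ * (1 + L))) * (n₀ * (1 + L) * J) := by gcongr
    _ = J / 2 := by field_simp
    _ ≤ _ := hgc.trans hgs'

/-- If `(f,g)` is a nonzero Möbius pair and `supp f` is thin, then `supp g`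
has a positive asymptotic density. -/
theorem mobius_pair_thin_supp_f_density_supp_g (f g : ℕ → ℂ)
    (hfg : MobiusPair f g) (hne : ∃ n : ℕ, 0 < n ∧ (f n ≠ 0 ∨ g n ≠ 0))
    (hthin : Thin {n : ℕ | f n ≠ 0}) :
    ∃ δ : ℝ, 0 < δ ∧ HasDensity {n : ℕ | g n ≠ 0} δ := by
  obtain ⟨δ, hδ⟩ := exists_density f g hfg hthin
  have hne' : ∃ n : ℕ, 0 < n ∧ f n ≠ 0 := by
    by_contra hcon
    push Not at hcon
    obtain ⟨n, hn, h⟩ := hne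
    rcases h with h | h
    · exact h (hcon n hn)
    · rw [g_ne_zero_iff f g hfg n hn] at h
      apply h
      refine Finset.sum_eq_zero fun d hd => ?_
      rw [Finset.mem_filter] at hd
      rw [hcon d (Nat.pos_of_mem_divisors hd.1), mul_zero]
  obtain ⟨η, hη, hlow⟩ := lower_bound f g hfg hne' hthin
  refine ⟨δ, lt_of_lt_of_le hη ?_, hδ⟩
  exact ge_of_tendsto_of_frequently hδ (frequently_atTop.2 hlow)
end

section
/- For any real numbers α, β ∈ [0,1], there exists a Möbius pair (f,g) of complex-valued arithmetic functions, not both identically zero, such that the support of f has asymptotic density α and the support of g has asymptotic density β. Moreover, f and g can be chosen to be multiplicative functions. -/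
open Filter

/-- `h` is a multiplicative arithmetic function. -/
def IsMultFn (h : ℕ → ℂ) : Prop :=
  h 1 = 1 ∧ ∀ m n : ℕ, Nat.Coprime m n → h (m * n) = h m * h n


theorem countIn_zero (A : Set ℕ) : countIn A 0 = 0 := by simp [countIn]

theorem hasDensity_congr {A B : Set ℕ} {d : ℝ} (h : HasDensity A d)
    (hAB : ∀ n, 0 < n → (n ∈ A ↔ n ∈ B)) : HasDensity B d := by
  classical
  have : ∀ x, countIn A x = countIn B x := by
    intro x
    unfold countIn
    congr 1
    apply Finset.filter_congr
    intro n hn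
    exact hAB n (Finset.mem_Icc.mp hn).1
  unfold HasDensity at *
  simpa only [this] using h

theorem countIn_mono {A B : Set ℕ} (h : A ⊆ B) (x : ℕ) : countIn A x ≤ countIn B x := by
  unfold countIn
  apply Finset.card_le_card
  intro n hn
  simp only [Finset.mem_filter] at *
  exact ⟨hn.1, h hn.2⟩

theorem countIn_diff {A B : Set ℕ} (h : B ⊆ A) (x : ℕ) :
    (countIn (A \ B) x : ℝ) = countIn A x - countIn B x := by
  classical
  have : countIn (A \ B) x + countIn B x = countIn A x := by
    unfold countIn
    rw [← Finset.card_union_of_disjoint]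
    · congr 1
      ext n
      simp only [Finset.mem_union, Finset.mem_filter, Set.mem_sdiff]
      have := @h n
      tauto
    · rw [Finset.disjoint_left]
      intro n hn hn'
      simp only [Finset.mem_filter, Set.mem_sdiff] at hn hn'
      tauto
  rw [← this]
  push_cast
  ring

theorem hasDensity_diff {A B : Set ℕ} {a b : ℝ} (h : B ⊆ A) (hA : HasDensity A a)
    (hB : HasDensity B b) : HasDensity (A \ B) (a - b) := by
  unfold HasDensity at *
  refine (hA.sub hB).congr ?_
  intro x
  rw [countIn_diff h, sub_div]

theorem hasDensity_univ : HasDensity Set.univ 1 := by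
  unfold HasDensity
  refine tendsto_const_nhds.congr' ?_
  filter_upwards [eventually_gt_atTop 0] with x hx
  have : (x : ℝ) ≠ 0 := by positivity
  simp [countIn, this]

/-- dilate -/
def dil (p : ℕ) (A : Set ℕ) : Set ℕ := {n | ∃ m ∈ A, n = p * m}

theorem countIn_dil {p : ℕ} (hp : 0 < p) (A : Set ℕ) (x : ℕ) :
    countIn (dil p A) x = countIn A (x / p) := by
  classical
  unfold countIn
  symm
  apply Finset.card_bij (fun m _ => p * m)
  · intro m hm
    simp only [Finset.mem_filter, Finset.mem_Icc] at *
    refine ⟨⟨Nat.mul_pos hp hm.1.1, ?_⟩, m, hm.2, rfl⟩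
    rw [mul_comm]
    exact (Nat.le_div_iff_mul_le hp).1 hm.1.2
  · intro a _ b _ h
    exact Nat.eq_of_mul_eq_mul_left hp h
  · intro n hn
    simp only [Finset.mem_filter, Finset.mem_Icc] at hn
    obtain ⟨⟨h1, h2⟩, m, hm, rfl⟩ := hn
    refine ⟨m, ?_, rfl⟩
    simp only [Finset.mem_filter, Finset.mem_Icc]
    refine ⟨⟨Nat.pos_of_mul_pos_left h1, ?_⟩, hm⟩
    rw [Nat.le_div_iff_mul_le hp, mul_comm]
    exact h2

theorem tendsto_div_aux {p : ℕ} (hp : 0 < p) :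
    Tendsto (fun x : ℕ => ((x / p : ℕ) : ℝ) / x) atTop (nhds (1 / p)) := by
  have hp' : (0 : ℝ) < p := by exact_mod_cast hp
  have h1 : Tendsto (fun x : ℕ => (1 / p : ℝ) - 1 / x) atTop (nhds (1 / p)) := by
    simpa using (tendsto_const_nhds (x := (1 / p : ℝ))).sub tendsto_one_div_atTop_nhds_zero_nat
  refine tendsto_of_tendsto_of_tendsto_of_le_of_le' h1 tendsto_const_nhds ?_ ?_
  · filter_upwards [eventually_gt_atTop 0] with x hx
    have hx' : (0 : ℝ) < x := by exact_mod_cast hx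
    have : (x : ℝ) / p < (x / p : ℕ) + 1 := by
      rw [div_lt_iff₀ hp']
      have := Nat.lt_mul_div_succ x hp
      rw [mul_comm] at this
      exact_mod_cast this
    rw [le_div_iff₀ hx', sub_mul, one_div_mul_cancel hx'.ne']
    have e : 1 / (p : ℝ) * x = x / p := by ring
    linarith
  · filter_upwards [eventually_gt_atTop 0] with x hx
    have hx' : (0 : ℝ) < x := by exact_mod_cast hx
    rw [div_le_iff₀ hx']
    have := @Nat.cast_div_le ℝ _ _ _ x p
    have e : 1 / (p : ℝ) * x = x / p := by ring
    linarith

theorem hasDensity_dil {p : ℕ} (hp : 0 < p) {A : Set ℕ} {d : ℝ} (hA : HasDensity A d) :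
    HasDensity (dil p A) (d * (1 / p)) := by
  unfold HasDensity at *
  have h := (hA.comp (Nat.tendsto_div_const_atTop hp.ne')).mul (tendsto_div_aux hp)
  refine h.congr ?_
  intro x
  simp only [Function.comp]
  rw [countIn_dil hp]
  rcases Nat.eq_zero_or_pos (x / p) with h0 | h0
  · simp [h0, countIn_zero]
  · have : ((x / p : ℕ) : ℝ) ≠ 0 := by positivity
    rw [div_mul_div_cancel₀ this]

/-- bad set: divisible -/
def badG (p : ℕ) : Set ℕ := {n | p ∣ n}
/-- bad set: exactly divisible -/
def badF (p : ℕ) : Set ℕ := {n | p ∣ n ∧ ¬ p * p ∣ n}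

theorem hasDensity_badG {p : ℕ} (hp : 0 < p) {A : Set ℕ} {d : ℝ} (hA : HasDensity A d)
    (hinv : ∀ n, p * n ∈ A ↔ n ∈ A) : HasDensity (A \ badG p) (d * (1 - 1 / p)) := by
  have hsub : dil p A ⊆ A := by
    rintro n ⟨m, hm, rfl⟩
    exact (hinv m).2 hm
  have h := hasDensity_diff hsub hA (hasDensity_dil hp hA)
  have e : d * (1 - 1 / (p : ℝ)) = d - d * (1 / p) := by ring
  rw [e]
  refine hasDensity_congr h ?_
  intro n _
  simp only [Set.mem_sdiff, badG, dil, Set.mem_ofPred_eq]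
  constructor
  · rintro ⟨h1, h2⟩
    refine ⟨h1, ?_⟩
    rintro ⟨m, rfl⟩
    exact h2 ⟨m, (hinv m).1 h1, rfl⟩
  · rintro ⟨h1, h2⟩
    refine ⟨h1, ?_⟩
    rintro ⟨m, _, rfl⟩
    exact h2 ⟨m, rfl⟩

theorem hasDensity_badF {p : ℕ} (hp : 0 < p) {A : Set ℕ} {d : ℝ} (hA : HasDensity A d)
    (hinv : ∀ n, p * n ∈ A ↔ n ∈ A) :
    HasDensity (A \ badF p) (d * (1 - 1 / p + 1 / p * (1 / p))) := by
  have hsub : dil p A ⊆ A := by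
    rintro n ⟨m, hm, rfl⟩
    exact (hinv m).2 hm
  have hsub2 : dil p (dil p A) ⊆ dil p A := by
    rintro n ⟨m, hm, rfl⟩
    exact ⟨m, hsub hm, rfl⟩
  have h1 := hasDensity_dil hp hA
  have h2 := hasDensity_diff hsub2 h1 (hasDensity_dil hp h1)
  have h := hasDensity_diff (Set.sdiff_subset.trans hsub) hA h2
  have e : d * (1 - 1 / (p : ℝ) + 1 / p * (1 / p)) =
    d - (d * (1 / p) - d * (1 / p) * (1 / p)) := by ring
  rw [e]
  refine hasDensity_congr h ?_
  intro n _
  have k1 : n ∈ A → (n ∈ dil p A ↔ p ∣ n) := by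
    intro hn
    constructor
    · rintro ⟨m, _, rfl⟩
      exact ⟨m, rfl⟩
    · rintro ⟨m, rfl⟩
      exact ⟨m, (hinv m).1 hn, rfl⟩
  have k2 : n ∈ A → (n ∈ dil p (dil p A) ↔ p * p ∣ n) := by
    intro hn
    constructor
    · rintro ⟨_, ⟨m, _, rfl⟩, rfl⟩
      exact ⟨m, by ring⟩
    · rintro ⟨m, rfl⟩
      rw [mul_assoc] at hn ⊢
      exact ⟨p * m, ⟨m, (hinv m).1 ((hinv _).1 hn), rfl⟩, rfl⟩
  simp only [Set.mem_sdiff, badF, Set.mem_ofPred_eq]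
  constructor
  · rintro ⟨h1, h2⟩
    rw [k1 h1, k2 h1] at h2
    exact ⟨h1, h2⟩
  · rintro ⟨h1, h2⟩
    rw [k1 h1, k2 h1]
    exact ⟨h1, h2⟩

/-- union bound -/
theorem countIn_iUnion_le (q : ℕ → ℕ) (hq : ∀ i, 0 < q i) (I : Set ℕ) (N x : ℕ) (T : ℝ)
    (hT : ∀ s : Finset ℕ, (∀ i ∈ s, i ∈ I ∧ N ≤ i) → ∑ i ∈ s, (1 / q i : ℝ) ≤ T)
    (hinj : Function.Injective q) :
    (countIn {n | ∃ i ∈ I, N ≤ i ∧ q i ∣ n} x : ℝ) ≤ x * T := by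
  classical
  have hfin : (Set.Finite {i | i ∈ I ∧ N ≤ i ∧ q i ≤ x}) := by
    apply ((Set.finite_Iic x).preimage hinj.injOn).subset
    rintro i ⟨_, _, h⟩
    exact h
  set s := hfin.toFinset with hs
  have h1 : (Finset.Icc 1 x).filter (fun n => n ∈ {n | ∃ i ∈ I, N ≤ i ∧ q i ∣ n}) ⊆
      s.biUnion (fun i => (Finset.Icc 1 x).filter (fun n => n ∈ dil (q i) Set.univ)) := by
    intro n hn
    simp only [Finset.mem_filter, Finset.mem_Icc, Set.mem_ofPred_eq] at hn
    obtain ⟨hn1, i, hi, hN, hd⟩ := hn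
    simp only [Finset.mem_biUnion, Finset.mem_filter, Finset.mem_Icc]
    refine ⟨i, ?_, hn1, ?_⟩
    · rw [hs, Set.Finite.mem_toFinset]
      exact ⟨hi, hN, (Nat.le_of_dvd hn1.1 hd).trans hn1.2⟩
    · obtain ⟨m, rfl⟩ := hd
      exact ⟨m, trivial, rfl⟩
  have h2 : countIn {n | ∃ i ∈ I, N ≤ i ∧ q i ∣ n} x ≤ ∑ i ∈ s, countIn (dil (q i) Set.univ) x := by
    unfold countIn
    refine le_trans (le_of_eq ?_) ((Finset.card_le_card h1).trans (Finset.card_biUnion_le.trans (le_of_eq ?_)))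
    · congr
    · congr
  calc (countIn {n | ∃ i ∈ I, N ≤ i ∧ q i ∣ n} x : ℝ)
      ≤ ((∑ i ∈ s, countIn (dil (q i) Set.univ) x : ℕ) : ℝ) := by exact_mod_cast h2
    _ = ∑ i ∈ s, ((x / q i : ℕ) : ℝ) := by
        push_cast
        refine Finset.sum_congr rfl fun i _ => ?_
        rw [countIn_dil (hq i)]
        simp [countIn]
    _ ≤ ∑ i ∈ s, (x * (1 / q i) : ℝ) := by
        refine Finset.sum_le_sum fun i _ => ?_
        have := @Nat.cast_div_le ℝ _ _ _ x (q i)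
        rw [mul_one_div]
        exact this
    _ = x * ∑ i ∈ s, (1 / q i : ℝ) := by rw [Finset.mul_sum]
    _ ≤ x * T := by
        apply mul_le_mul_of_nonneg_left _ (Nat.cast_nonneg x)
        apply hT
        intro i hi
        rw [hs, Set.Finite.mem_toFinset] at hi
        exact ⟨hi.1, hi.2.1⟩

/-- greedy partial products -/
noncomputable def gP (c : ℕ → ℝ) (α : ℝ) : ℕ → ℝ
  | 0 => 1
  | n + 1 => if α ≤ gP c α n * c n then gP c α n * c n else gP c α n

theorem gP_ge (c : ℕ → ℝ) (α : ℝ) (h1 : α ≤ 1) (n : ℕ) : α ≤ gP c α n := by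
  induction n with
  | zero => simpa [gP] using h1
  | succ n ih =>
    rw [gP]
    split_ifs with h
    · exact h
    · exact ih

theorem prod_le_exp (c : ℕ → ℝ) (h0 : ∀ i, 0 ≤ c i) (s : Finset ℕ) :
    ∏ i ∈ s, c i ≤ Real.exp (- ∑ i ∈ s, (1 - c i)) := by
  rw [← Finset.sum_neg_distrib, Real.exp_sum]
  refine Finset.prod_le_prod (fun i _ => h0 i) fun i _ => ?_
  have := Real.add_one_le_exp (-(1 - c i))
  linarith

theorem gP_tendsto (c : ℕ → ℝ) (α : ℝ) (h0 : ∀ i, 0 ≤ c i) (hc1 : ∀ i, c i ≤ 1)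
    (hc : Tendsto c atTop (nhds 1)) (hns : ¬ Summable fun i => 1 - c i)
    (hα0 : 0 ≤ α) (hα1 : α ≤ 1) : Tendsto (gP c α) atTop (nhds α) := by
  have hge := gP_ge c α hα1
  have hanti : Antitone (gP c α) := by
    apply antitone_nat_of_succ_le
    intro n
    rw [gP]
    split_ifs with h
    · exact mul_le_of_le_one_right (hα0.trans (hge n)) (hc1 n)
    · exact le_rfl
  have hlim := tendsto_atTop_ciInf hanti ⟨α, by rintro _ ⟨n, rfl⟩; exact hge n⟩
  set L := ⨅ i, gP c α i with hL
  have hLα : α ≤ L := ge_of_tendsto' hlim hge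
  have hLle : ∀ n, L ≤ gP c α n := fun n => hanti.le_of_tendsto hlim n
  rcases hLα.eq_or_lt with h | h
  · rwa [← h] at hlim
  exfalso
  have hLpos : 0 < L := hα0.trans_lt h
  have h2 : Tendsto (fun n => L * c n) atTop (nhds L) := by simpa using hc.const_mul L
  obtain ⟨N, hN⟩ := eventually_atTop.1 (h2.eventually (lt_mem_nhds h))
  have hstep : ∀ n, N ≤ n → gP c α (n + 1) = gP c α n * c n := by
    intro n hn
    rw [gP, if_pos]
    exact (hN n hn).le.trans (mul_le_mul_of_nonneg_right (hLle n) (h0 n))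
  have hprod : ∀ k, gP c α (k + N) = gP c α N * ∏ i ∈ Finset.range k, c (i + N) := by
    intro k
    induction k with
    | zero => simp
    | succ k ih =>
      rw [Finset.prod_range_succ, ← mul_assoc, ← ih, ← hstep (k + N) (by omega)]
      congr 1
      omega
  have hns' : ¬ Summable fun i => 1 - c (i + N) := by
    intro hs
    exact hns ((summable_nat_add_iff (f := fun i => 1 - c i) N).1 hs)
  have ht := (not_summable_iff_tendsto_nat_atTop_of_nonneg
    (fun n => sub_nonneg.2 (hc1 (n + N)))).1 hns'
  have ht2 : Tendsto (fun k => gP c α N * Real.exp (- ∑ i ∈ Finset.range k, (1 - c (i + N))))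
      atTop (nhds 0) := by
    simpa using (Real.tendsto_exp_neg_atTop_nhds_zero.comp ht).const_mul (gP c α N)
  have : L ≤ 0 := by
    refine ge_of_tendsto' ht2 fun k => ?_
    refine (hLle (k + N)).trans ?_
    rw [hprod]
    exact mul_le_mul_of_nonneg_left (prod_le_exp _ (fun i => h0 _) _) (hLpos.le.trans (hLle N))
  linarith

theorem sieve (q : ℕ → ℕ) (c : ℕ → ℝ) (E : ℕ → Set ℕ) (hq : ∀ i, 0 < q i)
    (hinj : Function.Injective q) (hns : ¬ Summable fun i => (1 / q i : ℝ))
    (h0 : ∀ i, 0 ≤ c i) (hcu : ∀ i, c i ≤ 1 - 1 / 2 * (1 / q i)) (hcl : ∀ i, 1 - (1 / q i : ℝ) ≤ c i)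
    (hE : ∀ i n, n ∈ E i → q i ∣ n)
    (hE2 : ∀ i j, i ≠ j → ∀ n, q j * n ∈ E i ↔ n ∈ E i)
    (hE3 : ∀ i (A : Set ℕ) d, HasDensity A d → (∀ n, q i * n ∈ A ↔ n ∈ A) →
      HasDensity (A \ E i) (d * c i))
    (α : ℝ) (hα0 : 0 ≤ α) (hα1 : α ≤ 1) :
    ∃ I : Set ℕ, HasDensity {n | ∀ i ∈ I, n ∉ E i} α := by
  classical
  have hqpos : ∀ i, (0 : ℝ) < 1 / q i := fun i => by
    have : (0 : ℝ) < q i := by exact_mod_cast hq i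
    positivity
  have hc1 : ∀ i, c i ≤ 1 := fun i => by linarith [hcu i, hqpos i]
  have hqt : Tendsto q atTop atTop := hinj.nat_tendsto_atTop
  have hqinv : Tendsto (fun i => (1 / q i : ℝ)) atTop (nhds 0) :=
    tendsto_one_div_atTop_nhds_zero_nat.comp hqt
  have hct : Tendsto c atTop (nhds 1) := by
    refine tendsto_of_tendsto_of_tendsto_of_le_of_le (g := fun i => 1 - (1 / q i : ℝ)) ?_
      tendsto_const_nhds hcl hc1
    simpa using (tendsto_const_nhds (x := (1 : ℝ))).sub hqinv
  have hns' : ¬ Summable fun i => 1 - c i := by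
    intro hs
    apply hns
    refine Summable.of_nonneg_of_le (fun i => (hqpos i).le) (fun i => ?_) (hs.mul_left 2)
    linarith [hcu i]
  have hP := gP_tendsto c α h0 hc1 hct hns' hα0 hα1
  set P := gP c α with hPdef
  set I : Set ℕ := {i | α ≤ P i * c i} with hI
  refine ⟨I, ?_⟩
  -- finite stages
  have hfin : ∀ N, HasDensity {n | ∀ i ∈ I, i < N → n ∉ E i} (P N) := by
    intro N
    induction N with
    | zero =>
      have : P 0 = 1 := rfl
      rw [this]
      exact hasDensity_congr hasDensity_univ (by simp)
    | succ N ih =>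
      have hPN : P (N + 1) = if α ≤ P N * c N then P N * c N else P N := rfl
      rw [hPN]
      split_ifs with h
      · refine hasDensity_congr (hE3 N _ _ ih ?_) ?_
        · intro n
          simp only [Set.mem_ofPred_eq]
          refine forall_congr' fun i => forall_congr' fun _ => forall_congr' fun hi => ?_
          rw [hE2 i N hi.ne]
        · intro n _
          simp only [Set.mem_sdiff, Set.mem_ofPred_eq]
          constructor
          · rintro ⟨h1, h2⟩ i hi hiN
            rcases Nat.lt_succ_iff_lt_or_eq.1 hiN with h' | rfl
            · exact h1 i hi h'
            · exact h2
          · intro h1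
            exact ⟨fun i hi hiN => h1 i hi (by omega), h1 N h (by omega)⟩
      · refine hasDensity_congr ih ?_
        intro n _
        simp only [Set.mem_ofPred_eq]
        constructor
        · intro h1 i hi hiN
          rcases Nat.lt_succ_iff_lt_or_eq.1 hiN with h' | rfl
          · exact h1 i hi h'
          · exact absurd hi h
        · intro h1 i hi hiN
          exact h1 i hi (by omega)
  -- product formula
  have hprod : ∀ N, P N = ∏ i ∈ Finset.range N, (if i ∈ I then c i else 1) := by
    intro N
    induction N with
    | zero => simp [hPdef, gP]
    | succ N ih =>
      have hPN : P (N + 1) = if α ≤ P N * c N then P N * c N else P N := rfl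
      rw [Finset.prod_range_succ, ← ih, hPN]
      by_cases h : α ≤ P N * c N
      · have : N ∈ I := h
        rw [if_pos h, if_pos this]
      · have : N ∉ I := h
        rw [if_neg h, if_neg this, mul_one]
  set S : Set ℕ := {n | ∀ i ∈ I, n ∉ E i} with hS
  have hSsub : ∀ N, S ⊆ {n | ∀ i ∈ I, i < N → n ∉ E i} := fun N n hn i hi _ => hn i hi
  have hub : ∀ ε > 0, ∀ᶠ x : ℕ in atTop, (countIn S x : ℝ) / x < α + ε := by
    intro ε hε
    obtain ⟨N, hN⟩ := (hP.eventually (gt_mem_nhds (show α < α + ε by linarith))).exists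
    filter_upwards [(hfin N).eventually (gt_mem_nhds hN)] with x hx
    refine lt_of_le_of_lt ?_ hx
    gcongr
    exact countIn_mono (hSsub N) x
  have hlb : ∀ ε > 0, ∀ᶠ x : ℕ in atTop, α - ε < (countIn S x : ℝ) / x := by
    intro ε hε
    rcases hα0.eq_or_lt with rfl | hpos
    · filter_upwards with x
      have : (0 : ℝ) ≤ (countIn S x : ℝ) / x := by positivity
      linarith
    -- tail summability
    set a : ℕ → ℝ := fun i => if i ∈ I then (1 / q i : ℝ) else 0 with ha
    have ha0 : ∀ i, 0 ≤ a i := by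
      intro i
      simp only [ha]
      split_ifs
      · exact (hqpos i).le
      · exact le_rfl
    have hsum : Summable a := by
      refine summable_of_sum_range_le (c := 2 * (-Real.log α)) ha0 fun N => ?_
      have k1 : α ≤ Real.exp (-∑ i ∈ Finset.range N, (1 - if i ∈ I then c i else 1)) := by
        refine (gP_ge c α hα1 N).trans ?_
        change P N ≤ _
        rw [hprod N]
        apply prod_le_exp (fun i => if i ∈ I then c i else 1)
        intro i
        split_ifs
        · exact h0 i
        · exact zero_le_one
      have k2 := (Real.log_le_iff_le_exp hpos).2 k1
      have k3 : ∑ i ∈ Finset.range N, a i ≤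
          2 * ∑ i ∈ Finset.range N, (1 - if i ∈ I then c i else 1) := by
        rw [Finset.mul_sum]
        refine Finset.sum_le_sum fun i _ => ?_
        simp only [ha]
        split_ifs
        · linarith [hcu i]
        · simp
      linarith
    have htail := tendsto_sum_nat_add a
    obtain ⟨N, hN⟩ := (htail.eventually (gt_mem_nhds (show (0 : ℝ) < ε / 2 by linarith))).exists
    have hT : ∀ s : Finset ℕ, (∀ i ∈ s, i ∈ I ∧ N ≤ i) → ∑ i ∈ s, (1 / q i : ℝ) ≤ ε / 2 := by
      intro s hs
      refine le_trans ?_ hN.le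
      have hsN : Summable fun k => a (k + N) := (summable_nat_add_iff N).2 hsum
      have e : ∑ i ∈ s, (1 / q i : ℝ) = ∑ k ∈ s.image (fun i => i - N), a (k + N) := by
        rw [Finset.sum_image]
        · refine Finset.sum_congr rfl fun i hi => ?_
          rw [Nat.sub_add_cancel (hs i hi).2]
          simp only [ha]
          rw [if_pos (hs i hi).1]
        · intro i hi j hj hij
          have := (hs i hi).2
          have := (hs j hj).2
          simp only at hij
          omega
      rw [e]
      exact hsN.sum_le_tsum _ (fun i _ => ha0 _)
    have hPα : α ≤ P N := gP_ge c α hα1 N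
    filter_upwards [(hfin N).eventually (lt_mem_nhds (show α - ε / 2 < P N by linarith)),
      eventually_gt_atTop 0] with x hx hx0
    have hx' : (0 : ℝ) < x := by exact_mod_cast hx0
    have m1 := countIn_diff (hSsub N) x
    have m2 : countIn ({n | ∀ i ∈ I, i < N → n ∉ E i} \ S) x ≤
        countIn {n | ∃ i ∈ I, N ≤ i ∧ q i ∣ n} x := by
      apply countIn_mono
      rintro n ⟨h1, h2⟩
      simp only [hS, Set.mem_ofPred_eq, not_forall, not_not] at h1 h2
      obtain ⟨i, hi, hn⟩ := h2
      refine ⟨i, hi, ?_, hE i n hn⟩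
      by_contra hlt
      exact h1 i hi (by omega) hn
    have m3 := countIn_iUnion_le q hq I N x (ε / 2) hT hinj
    have m4 : (countIn ({n | ∀ i ∈ I, i < N → n ∉ E i} \ S) x : ℝ) ≤
        countIn {n | ∃ i ∈ I, N ≤ i ∧ q i ∣ n} x := by exact_mod_cast m2
    rw [lt_div_iff₀ hx'] at hx ⊢
    nlinarith
  unfold HasDensity
  rw [Metric.tendsto_nhds]
  intro ε hε
  filter_upwards [hub ε hε, hlb ε hε] with x h1 h2
  rw [Real.dist_eq, abs_lt]
  constructor <;> linarith

theorem not_summable_nth : ¬ Summable fun i => (1 / (Nat.nth Nat.Prime i : ℕ) : ℝ) := by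
  intro h
  apply not_summable_one_div_on_primes
  rw [← (Nat.nth_injective Nat.infinite_setOfPred_prime).summable_iff]
  · refine h.congr ?_
    intro i
    have : Nat.nth Nat.Prime i ∈ {p | Nat.Prime p} := Nat.prime_nth_prime i
    simp only [Function.comp]
    rw [Set.indicator_of_mem this]
  · intro x hx
    rw [Nat.range_nth_of_infinite Nat.infinite_setOfPred_prime] at hx
    exact Set.indicator_of_notMem hx _

theorem split_not_summable (a : ℕ → ℝ) (h0 : ∀ i, 0 ≤ a i) (ha : Antitone a)
    (hns : ¬ Summable a) :
    (¬ Summable fun i => a (2 * i)) ∧ ¬ Summable fun i => a (2 * i + 1) := by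
  have key : (Summable fun i => a (2 * i)) → (Summable fun i => a (2 * i + 1)) → False := by
    intro h1 h2
    exact hns (h1.hasSum.even_add_odd h2.hasSum).summable
  constructor
  · intro h
    refine key h (Summable.of_nonneg_of_le (fun i => h0 _) (fun i => ha (by omega)) h)
  · intro h
    refine key ?_ h
    rw [← summable_nat_add_iff 1]
    exact Summable.of_nonneg_of_le (fun i => h0 _) (fun i => ha (by omega)) h

/-- the local factor of `f` at `p ^ k` -/
noncomputable def locF (PF PG : Set ℕ) (p k : ℕ) : ℂ := by
  classical
  exact if p ∈ PG then 1 else if p ∈ PF ∧ k = 1 then 0 else 2 ^ k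

theorem locF_zero (PF PG : Set ℕ) (p : ℕ) : locF PF PG p 0 = 1 := by
  simp [locF]

/-- the function `f` -/
noncomputable def arF (PF PG : Set ℕ) : ArithmeticFunction ℂ where
  toFun n := if n = 0 then 0 else n.factorization.prod (locF PF PG)
  map_zero' := by simp

theorem arF_apply (PF PG : Set ℕ) {n : ℕ} (hn : n ≠ 0) :
    arF PF PG n = n.factorization.prod (locF PF PG) := by
  change (if n = 0 then 0 else n.factorization.prod (locF PF PG)) = _
  rw [if_neg hn]

theorem arF_mult (PF PG : Set ℕ) : (arF PF PG).IsMultiplicative := by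
  rw [ArithmeticFunction.IsMultiplicative.iff_ne_zero]
  constructor
  · rw [arF_apply _ _ one_ne_zero]
    simp
  · intro m n hm hn hmn
    rw [arF_apply _ _ hm, arF_apply _ _ hn, arF_apply _ _ (mul_ne_zero hm hn),
      Nat.factorization_mul hm hn]
    exact Finsupp.prod_add_index_of_disjoint (Nat.Coprime.disjoint_primeFactors hmn) _

theorem arF_prime_pow (PF PG : Set ℕ) {p : ℕ} (hp : p.Prime) (k : ℕ) :
    arF PF PG (p ^ k) = locF PF PG p k := by
  rw [arF_apply _ _ (pow_ne_zero _ hp.ne_zero), hp.factorization_pow,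
    Finsupp.prod_single_index (locF_zero PF PG p)]

open ArithmeticFunction ArithmeticFunction.Moebius ArithmeticFunction.zeta in
/-- the function `g` -/
noncomputable def arG (PF PG : Set ℕ) : ArithmeticFunction ℂ :=
  (μ : ArithmeticFunction ℂ) * arF PF PG

open ArithmeticFunction ArithmeticFunction.Moebius ArithmeticFunction.zeta in
theorem arG_mult (PF PG : Set ℕ) : (arG PF PG).IsMultiplicative :=
  isMultiplicative_moebius.intCast.mul (arF_mult PF PG)

open ArithmeticFunction ArithmeticFunction.Moebius ArithmeticFunction.zeta in
theorem arF_eq_sum (PF PG : Set ℕ) (n : ℕ) :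
    arF PF PG n = ∑ d ∈ n.divisors, arG PF PG d := by
  rw [← coe_zeta_mul_apply, arG, ← mul_assoc, coe_zeta_mul_coe_moebius, one_mul]

theorem arG_prime_pow (PF PG : Set ℕ) {p : ℕ} (hp : p.Prime) (k : ℕ) :
    arG PF PG (p ^ (k + 1)) = locF PF PG p (k + 1) - locF PF PG p k := by
  rw [← arF_prime_pow _ _ hp, ← arF_prime_pow _ _ hp, arF_eq_sum, arF_eq_sum,
    Nat.sum_divisors_prime_pow hp, Nat.sum_divisors_prime_pow hp, Finset.sum_range_succ _ (k + 1)]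
  ring

theorem ne_zero_iff (h : ArithmeticFunction ℂ) (hm : h.IsMultiplicative) {n : ℕ} (hn : n ≠ 0) :
    h n ≠ 0 ↔ ∀ p ∈ n.primeFactors, h (p ^ n.factorization p) ≠ 0 := by
  rw [hm.multiplicative_factorization h hn, Finsupp.prod, Finset.prod_ne_zero_iff]
  rfl

theorem arF_ne_zero (PF PG : Set ℕ) (hd : Disjoint PF PG) (hPF : ∀ p ∈ PF, p.Prime)
    {n : ℕ} (hn : n ≠ 0) :
    arF PF PG n ≠ 0 ↔ ∀ p ∈ PF, n ∉ badF p := by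
  have hb : ∀ p, p.Prime → (n ∈ badF p ↔ n.factorization p = 1) := by
    intro p hp
    simp only [badF, Set.mem_ofPred_eq]
    rw [← pow_two, hp.pow_dvd_iff_le_factorization hn, hp.dvd_iff_one_le_factorization hn]
    omega
  rw [ne_zero_iff _ (arF_mult PF PG) hn]
  constructor
  · intro h p hp hbad
    have hpp := hPF p hp
    have hm : p ∈ n.primeFactors := Nat.mem_primeFactors.2 ⟨hpp, hbad.1, hn⟩
    have h1 := h p hm
    rw [arF_prime_pow _ _ hpp, (hb p hpp).1 hbad] at h1
    apply h1
    have : p ∉ PG := Set.disjoint_left.1 hd hp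
    simp [locF, this, hp]
  · intro h p hp
    have hpp := Nat.prime_of_mem_primeFactors hp
    rw [arF_prime_pow _ _ hpp]
    unfold locF
    split_ifs with h1 h2
    · exact one_ne_zero
    · exact absurd ((hb p hpp).2 h2.2) (h p h2.1)
    · exact pow_ne_zero _ two_ne_zero

theorem arG_ne_zero (PF PG : Set ℕ) (hPG : ∀ p ∈ PG, p.Prime)
    {n : ℕ} (hn : n ≠ 0) :
    arG PF PG n ≠ 0 ↔ ∀ p ∈ PG, n ∉ badG p := by
  rw [ne_zero_iff _ (arG_mult PF PG) hn]
  have hk : ∀ p ∈ n.primeFactors, ∃ k, n.factorization p = k + 1 := by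
    intro p hp
    have h1 := Nat.mem_primeFactors.1 hp
    have := (h1.1.dvd_iff_one_le_factorization hn).1 h1.2.1
    exact ⟨n.factorization p - 1, by omega⟩
  constructor
  · intro h p hp hbad
    have hpp := hPG p hp
    have hm : p ∈ n.primeFactors := Nat.mem_primeFactors.2 ⟨hpp, hbad, hn⟩
    have h1 := h p hm
    obtain ⟨k, hk⟩ := hk p hm
    rw [hk, arG_prime_pow _ _ hpp] at h1
    apply h1
    simp [locF, hp]
  · intro h p hp
    have hpp := Nat.prime_of_mem_primeFactors hp
    obtain ⟨k, hk⟩ := hk p hp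
    rw [hk, arG_prime_pow _ _ hpp]
    have hpG : p ∉ PG := fun hG => h p hG (Nat.dvd_of_mem_primeFactors hp)
    have h2 : (2 : ℂ) ^ k ≠ 0 := pow_ne_zero _ two_ne_zero
    unfold locF
    rw [if_neg hpG, if_neg hpG]
    split_ifs with h1 h3 h4
    · omega
    · simp
    · simp
    · rw [pow_succ]
      intro h5
      apply h2
      linear_combination h5

/-- For any `α, β ∈ [0,1]` there is a nonzero Möbius pair `(f,g)`, with `f` and
`g` multiplicative, such that `supp f` has density `α` and `supp g` has density `β`. -/
theorem exists_mobius_pair_prescribed_densities (α β : ℝ)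
    (hα : α ∈ Set.Icc (0 : ℝ) 1) (hβ : β ∈ Set.Icc (0 : ℝ) 1) :
    ∃ f g : ℕ → ℂ, MobiusPair f g ∧ (∃ n : ℕ, 0 < n ∧ (f n ≠ 0 ∨ g n ≠ 0)) ∧
      HasDensity {n : ℕ | f n ≠ 0} α ∧ HasDensity {n : ℕ | g n ≠ 0} β ∧
      IsMultFn f ∧ IsMultFn g := by
  have hnp : ∀ i, (Nat.nth Nat.Prime i).Prime := Nat.prime_nth_prime
  have hinj : Function.Injective (Nat.nth Nat.Prime) :=
    Nat.nth_injective Nat.infinite_setOfPred_prime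
  have hmono : StrictMono (Nat.nth Nat.Prime) := Nat.nth_strictMono Nat.infinite_setOfPred_prime
  obtain ⟨hs1, hs2⟩ := split_not_summable (fun i => (1 / (Nat.nth Nat.Prime i : ℕ) : ℝ))
    (fun i => by positivity)
    (by
      intro i j hij
      have h1 : (0 : ℝ) < (Nat.nth Nat.Prime i : ℕ) := by exact_mod_cast (hnp i).pos
      have h2 : ((Nat.nth Nat.Prime i : ℕ) : ℝ) ≤ (Nat.nth Nat.Prime j : ℕ) := by
        exact_mod_cast hmono.monotone hij
      exact one_div_le_one_div_of_le h1 h2) not_summable_nth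
  have hhalf : ∀ p : ℕ, p.Prime → (1 / p : ℝ) ≤ 1 / 2 ∧ (0 : ℝ) < 1 / p := by
    intro p hp
    have h2 : (2 : ℝ) ≤ p := by exact_mod_cast hp.two_le
    exact ⟨one_div_le_one_div_of_le (by norm_num) h2, by positivity⟩
  have hcop : ∀ p q : ℕ, p.Prime → q.Prime → p ≠ q → Nat.Coprime p q :=
    fun p q hp hq h => (Nat.coprime_primes hp hq).2 h
  obtain ⟨I, hI⟩ := sieve (fun i => Nat.nth Nat.Prime (2 * i))
    (fun i => 1 - 1 / (Nat.nth Nat.Prime (2 * i) : ℕ) +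
      1 / (Nat.nth Nat.Prime (2 * i) : ℕ) * (1 / (Nat.nth Nat.Prime (2 * i) : ℕ)))
    (fun i => badF (Nat.nth Nat.Prime (2 * i))) (fun i => (hnp _).pos)
    (fun i j h => by have := hinj h; omega) hs1
    (fun i => by have := hhalf _ (hnp (2 * i)); nlinarith)
    (fun i => by have := hhalf _ (hnp (2 * i)); nlinarith)
    (fun i => by have := hhalf _ (hnp (2 * i)); nlinarith)
    (fun i n h => h.1)
    (fun i j hij n => by
      have hc := hcop _ _ (hnp (2 * i)) (hnp (2 * j)) (fun h => hij (by have := hinj h; omega))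
      simp only [badF, Set.mem_ofPred_eq]
      rw [hc.dvd_mul_left, (Nat.Coprime.mul_left hc hc).dvd_mul_left])
    (fun i A d hA hinv => hasDensity_badF (hnp _).pos hA hinv) α hα.1 hα.2
  obtain ⟨J, hJ⟩ := sieve (fun i => Nat.nth Nat.Prime (2 * i + 1))
    (fun i => 1 - 1 / (Nat.nth Nat.Prime (2 * i + 1) : ℕ))
    (fun i => badG (Nat.nth Nat.Prime (2 * i + 1))) (fun i => (hnp _).pos)
    (fun i j h => by have := hinj h; omega) hs2
    (fun i => by have := hhalf _ (hnp (2 * i + 1)); linarith)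
    (fun i => by have := hhalf _ (hnp (2 * i + 1)); linarith)
    (fun i => le_rfl)
    (fun i n h => h)
    (fun i j hij n => by
      have hc := hcop _ _ (hnp (2 * i + 1)) (hnp (2 * j + 1))
        (fun h => hij (by have := hinj h; omega))
      simp only [badG, Set.mem_ofPred_eq]
      rw [hc.dvd_mul_left])
    (fun i A d hA hinv => hasDensity_badG (hnp _).pos hA hinv) β hβ.1 hβ.2
  set PF : Set ℕ := (fun i => Nat.nth Nat.Prime (2 * i)) '' I with hPF
  set PG : Set ℕ := (fun i => Nat.nth Nat.Prime (2 * i + 1)) '' J with hPG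
  have hd : Disjoint PF PG := by
    rw [Set.disjoint_left]
    rintro _ ⟨i, _, rfl⟩ ⟨j, _, h⟩
    have := hinj h
    omega
  refine ⟨arF PF PG, arG PF PG, fun n _ => arF_eq_sum PF PG n,
    ⟨1, one_pos, Or.inl ?_⟩, ?_, ?_, ⟨(arF_mult PF PG).1, fun m n h => (arF_mult PF PG).2 h⟩,
    ⟨(arG_mult PF PG).1, fun m n h => (arG_mult PF PG).2 h⟩⟩
  · rw [(arF_mult PF PG).1]
    exact one_ne_zero
  · refine hasDensity_congr hI fun n hn => ?_
    simp only [Set.mem_ofPred_eq]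
    rw [arF_ne_zero PF PG hd (by rintro _ ⟨i, _, rfl⟩; exact hnp _) hn.ne', hPF,
      Set.forall_mem_image]
  · refine hasDensity_congr hJ fun n hn => ?_
    simp only [Set.mem_ofPred_eq]
    rw [arG_ne_zero PF PG (by rintro _ ⟨i, _, rfl⟩; exact hnp _) hn.ne', hPG,
      Set.forall_mem_image]
end

section
/- If A is a thin set of natural numbers, then the set of multiples M(A) := {an : a ∈ A, n ∈ ℕ} possesses an asymptotic density. -/
open Filter

/-- The set of multiples of `A`: positive integers with at least one divisor in `A`. -/
def setOfMultiples (A : Set ℕ) : Set ℕ := {n : ℕ | 0 < n ∧ ∃ a ∈ A, a ∣ n}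

lemma countIn_periodic_step (P : Set ℕ) (L : ℕ) (hP : ∀ n, n + L ∈ P ↔ n ∈ P) (x : ℕ) :
    countIn P (x + L) = countIn P x + countIn P L := by
  classical
  have hs : ∀ y, countIn P (y + 1) = countIn P y + if y + 1 ∈ P then 1 else 0 := by
    intro y
    unfold countIn
    rw [← Finset.insert_Icc_right_eq_Icc_add_one (by omega : 1 ≤ y + 1), Finset.filter_insert]
    split_ifs with h
    · rw [Finset.card_insert_of_notMem (by simp)]
    · simp
  induction x with
  | zero => simp [countIn]
  | succ n ih =>
    have e : n + 1 + L = n + L + 1 := by ring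
    rw [e, hs, hs, ih]
    have : n + L + 1 ∈ P ↔ n + 1 ∈ P := by rw [← hP (n + 1), e]
    simp only [this]
    ring

lemma countIn_le (P : Set ℕ) (x : ℕ) : countIn P x ≤ x := by
  classical
  unfold countIn
  exact (Finset.card_filter_le _ _).trans (by simp)

lemma hasDensity_periodic (P : Set ℕ) (L : ℕ) (hL : 0 < L) (hP : ∀ n, n + L ∈ P ↔ n ∈ P) :
    ∃ δ, HasDensity P δ := by
  set c := countIn P L with hc
  have key : ∀ q r, countIn P (r + L * q) = countIn P r + c * q := by
    intro q r
    induction q with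
    | zero => simp
    | succ q ih =>
      rw [Nat.mul_succ, ← add_assoc, countIn_periodic_step P L hP, ih]; ring
  have hL' : (0 : ℝ) < L := by exact_mod_cast hL
  refine ⟨(c : ℝ) / L, ?_⟩
  unfold HasDensity
  rw [tendsto_iff_norm_sub_tendsto_zero]
  refine squeeze_zero' (g := fun x : ℕ => ((L : ℝ) + c) / x) (.of_forall fun _ => norm_nonneg _) ?_
    (tendsto_const_div_atTop_nhds_zero_nat _)
  filter_upwards [eventually_gt_atTop 0] with x hx
  have hx' : (0 : ℝ) < x := by exact_mod_cast hx
  have h1 : countIn P x = countIn P (x % L) + c * (x / L) := by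
    rw [← key, Nat.mod_add_div]
  have h2 : x % L < L := Nat.mod_lt _ hL
  have h3 := countIn_le P (x % L)
  have h4 : (x : ℝ) = (x % L : ℕ) + L * (x / L : ℕ) := by exact_mod_cast (Nat.mod_add_div x L).symm
  have h5 : (countIn P x : ℝ) = countIn P (x % L) + c * (x / L : ℕ) := by exact_mod_cast h1
  have h6 : ((x % L : ℕ) : ℝ) ≤ L := by exact_mod_cast h2.le
  have h7 : (countIn P (x % L) : ℝ) ≤ (x % L : ℕ) := by exact_mod_cast h3
  have e : (countIn P x : ℝ) / x - c / L = (countIn P (x % L) - c / L * (x % L : ℕ)) / x := by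
    rw [h5]
    have : (c : ℝ) / L = (c / L * x) / x := by field_simp
    rw [this, ← sub_div]
    congr 1
    nth_rewrite 1 [h4]
    field_simp
    ring
  rw [e, norm_div, Real.norm_of_nonneg hx'.le]
  gcongr
  have h8 : (c : ℝ) / L * (x % L : ℕ) ≤ c := by
    calc (c : ℝ) / L * (x % L : ℕ) ≤ c / L * L := by gcongr
      _ = c := by field_simp
  have h9 : 0 ≤ (c : ℝ) / L * (x % L : ℕ) := by positivity
  have h10 : (0 : ℝ) ≤ countIn P (x % L) := by positivity
  have h11 : (0 : ℝ) ≤ c := by positivity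
  rw [Real.norm_eq_abs, abs_le]
  constructor <;> linarith

lemma approx (A : Set ℕ) (hA : Thin A) (ε : ℝ) (hε : 0 < ε) :
    ∃ P : Set ℕ, (∃ δ, HasDensity P δ) ∧ ∀ x : ℕ, 0 < x →
      |(countIn (setOfMultiples A) x : ℝ) / x - countIn P x / x| ≤ ε := by
  classical
  have hg : Summable (A.indicator (fun n : ℕ => (1 : ℝ) / n)) := by
    rw [← summable_subtype_iff_indicator]; exact hA
  obtain ⟨s, hs⟩ := summable_iff_vanishing_norm.1 hg ε hε
  let P : Set ℕ := {n | ∃ a ∈ s, a ∈ A ∧ 0 < a ∧ a ∣ n}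
  refine ⟨P, ?_, ?_⟩
  · refine hasDensity_periodic P (∏ a ∈ s.filter (0 < ·), a)
      (Finset.prod_pos fun a ha => (Finset.mem_filter.1 ha).2) fun n => ?_
    have hd : ∀ a ∈ s, 0 < a → a ∣ ∏ a ∈ s.filter (0 < ·), a := fun a h1 h2 =>
      Finset.dvd_prod_of_mem (fun a => a) (Finset.mem_filter.2 ⟨h1, h2⟩)
    constructor
    · rintro ⟨a, h1, h2, h3, h4⟩
      exact ⟨a, h1, h2, h3, (Nat.dvd_add_left (hd a h1 h3)).1 h4⟩
    · rintro ⟨a, h1, h2, h3, h4⟩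
      exact ⟨a, h1, h2, h3, (Nat.dvd_add_left (hd a h1 h3)).2 h4⟩
  · intro x hx
    have hx' : (0 : ℝ) < x := by exact_mod_cast hx
    have hle : countIn P x ≤ countIn (setOfMultiples A) x := by
      unfold countIn
      apply Finset.card_le_card
      intro n hn
      simp only [Finset.mem_filter, Finset.mem_Icc] at hn ⊢
      obtain ⟨hn, a, h1, h2, h3, h4⟩ := hn
      exact ⟨hn, by omega, a, h2, h4⟩
    set t := (Finset.Icc 1 x \ s).filter (· ∈ A) with ht
    have hub : countIn (setOfMultiples A) x ≤ countIn P x + ∑ a ∈ t, x / a := by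
      have : (Finset.Icc 1 x).filter (· ∈ setOfMultiples A) ⊆
          (Finset.Icc 1 x).filter (· ∈ P) ∪
            t.biUnion (fun a => (Finset.Ioc 0 x).filter (a ∣ ·)) := by
        intro n hn
        simp only [Finset.mem_filter, Finset.mem_Icc] at hn
        obtain ⟨hn, h0, a, h1, h2⟩ := hn
        have ha : 0 < a := Nat.pos_of_dvd_of_pos h2 h0
        have hax := Nat.le_of_dvd h0 h2
        rw [Finset.mem_union]
        by_cases has : a ∈ s
        · left
          simp only [Finset.mem_filter, Finset.mem_Icc]
          exact ⟨hn, a, has, h1, ha, h2⟩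
        · right
          simp only [Finset.mem_biUnion, ht, Finset.mem_filter, Finset.mem_sdiff, Finset.mem_Icc,
            Finset.mem_Ioc]
          exact ⟨a, ⟨⟨⟨by omega, by omega⟩, has⟩, h1⟩, ⟨by omega, by omega⟩, h2⟩
      unfold countIn
      refine (Finset.card_le_card this).trans ((Finset.card_union_le _ _).trans ?_)
      gcongr
      refine Finset.card_biUnion_le.trans (le_of_eq (Finset.sum_congr rfl fun a _ => ?_))
      exact Nat.Ioc_filter_dvd_card_eq_div x a
    have hsum : ∑ a ∈ t, (1 : ℝ) / a ≤ ε := by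
      have := hs t (by
        rw [Finset.disjoint_left]
        intro a ha
        simp only [ht, Finset.mem_filter, Finset.mem_sdiff] at ha
        exact ha.1.2)
      have e : ∑ a ∈ t, A.indicator (fun n : ℕ => (1 : ℝ) / n) a = ∑ a ∈ t, (1 : ℝ) / a :=
        Finset.sum_congr rfl fun a ha => Set.indicator_of_mem (Finset.mem_filter.1 ha).2 _
      rw [e] at this
      exact (le_abs_self _).trans this.le
    have hub' : (countIn (setOfMultiples A) x : ℝ) ≤ countIn P x + x * ε := by
      calc (countIn (setOfMultiples A) x : ℝ) ≤ countIn P x + ∑ a ∈ t, ((x / a : ℕ) : ℝ) := by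
            exact_mod_cast hub
        _ ≤ countIn P x + ∑ a ∈ t, x * ((1 : ℝ) / a) := by
            gcongr with a ha
            rw [mul_one_div]
            exact Nat.cast_div_le
        _ ≤ _ := by rw [← Finset.mul_sum]; gcongr
    have hle' : (countIn P x : ℝ) ≤ countIn (setOfMultiples A) x := by exact_mod_cast hle
    rw [← sub_div, abs_of_nonneg (div_nonneg (by linarith) hx'.le), div_le_iff₀ hx']
    linarith

/-- (Erdős) If `A` is thin, then its set of multiples has an asymptotic density. -/
theorem thin_setOfMultiples_hasDensity (A : Set ℕ) (hA : Thin A) :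
    ∃ δ : ℝ, HasDensity (setOfMultiples A) δ := by
  unfold HasDensity
  apply cauchySeq_tendsto_of_complete
  rw [Metric.cauchySeq_iff']
  intro ε hε
  obtain ⟨P, ⟨δ, hδ⟩, hP⟩ := approx A hA (ε / 5) (by positivity)
  obtain ⟨N, hN⟩ := Metric.tendsto_atTop.1 hδ (ε / 5) (by positivity)
  refine ⟨N + 1, fun n hn => ?_⟩
  have a1 := abs_le.1 (hP n (by omega))
  have a2 := abs_le.1 (hP (N + 1) (by omega))
  have a3 := hN n (by omega)
  have a4 := hN (N + 1) (by omega)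
  rw [Real.dist_eq, abs_lt] at a3 a4 ⊢
  constructor <;> linarith [a1.1, a1.2, a2.1, a2.2, a3.1, a3.2, a4.1, a4.2]
end
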